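/- Let X be an (N+n)×(N+n) skew-symmetric real matrix whose upper-left N×N block X_∅ is invertible (N even). Then there exists an n×n skew-symmetric real matrix Y such that for every subset I ⊆ {N+1,…,N+n}, Pf(X_I) = Pf(Y_I)·Pf(X_∅), where X_I is the principal submatrix of X on indices {1,…,N} ∪ I, and Y_I is the principal submatrix of Y on I. -/

import Mathlib

/-- The Pfaffian of a square real matrix, via the permutation-sum formula;
defined to be `0` in odd size. -/
noncomputable def Pf {m : ℕ} (A : Matrix (Fin m) (Fin m) ℝ) : ℝ :=
  if Even m then
    (((2 : ℝ) ^ (m / 2) * (Nat.factorial (m / 2)))⁻¹) *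
      ∑ σ : Equiv.Perm (Fin m), ((Equiv.Perm.sign σ : ℤ) : ℝ) *
        ∏ i : Fin (m / 2),
          A (σ ⟨2 * i.val, by have := i.2; omega⟩) (σ ⟨2 * i.val + 1, by have := i.2; omega⟩)
  else 0

/-- Order-preserving enumeration of a finite set of indices. -/
def embI {n : ℕ} (I : Finset (Fin n)) : Fin I.card → Fin n :=
  fun j => (I.orderIsoOfFin rfl j : Fin n)

/-- Order-preserving enumeration of `{0,…,N-1} ∪ (N + I)` inside `Fin (N + n)`. -/
def embNI (N n : ℕ) (I : Finset (Fin n)) : Fin (N + I.card) → Fin (N + n) :=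
  fun j =>
    if h : j.val < N then ⟨j.val, by omega⟩
    else ⟨N + (embI I ⟨j.val - N, by have := j.2; omega⟩).val,
      by have := (embI I ⟨j.val - N, by have := j.2; omega⟩).2; omega⟩

open Matrix in
/-- Unnormalized Pfaffian sum with a chosen pairing of the index type. -/
def pfS {ι α : Type*} [Fintype ι] [Fintype α] [DecidableEq α] (e : ι × Fin 2 ≃ α)
    (M : Matrix α α ℝ) : ℝ :=
  ∑ σ : Equiv.Perm α, ((Equiv.Perm.sign σ : ℤ) : ℝ) *
    ∏ i : ι, M (σ (e (i, 0))) (σ (e (i, 1)))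

theorem pfS_reindex {ι α β : Type*} [Fintype ι] [Fintype α] [DecidableEq α]
    [Fintype β] [DecidableEq β] (e : ι × Fin 2 ≃ α) (φ : α ≃ β) (M : Matrix β β ℝ) :
    pfS (e.trans φ) M = pfS e (M.submatrix φ φ) := by
  unfold pfS
  rw [← Equiv.sum_comp (Equiv.permCongr φ)]
  refine Finset.sum_congr rfl fun σ _ => ?_
  simp [Equiv.Perm.sign_permCongr]

theorem pfS_congr {ι α : Type*} [Fintype ι] [DecidableEq ι] [Fintype α] [DecidableEq α]
    (e : ι × Fin 2 ≃ α) (P M : Matrix α α ℝ) :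
    pfS e (P * M * P.transpose) = P.det * pfS e M := by
  have h1 : ∀ σ : Equiv.Perm α, ∏ i : ι, (P * M * P.transpose) (σ (e (i, 0))) (σ (e (i, 1)))
      = ∑ f : α → α, (∏ a, P (σ a) (f a)) * ∏ i, M (f (e (i, 0))) (f (e (i, 1))) := by
    intro σ
    have h2 : ∀ x y, (P * M * P.transpose) x y
        = ∑ c : α × α, P x c.1 * P y c.2 * M c.1 c.2 := by
      intro x y
      rw [Fintype.sum_prod_type_right]
      simp only [Matrix.mul_apply, Matrix.transpose_apply, Finset.sum_mul]
      refine Finset.sum_congr rfl fun _ _ => Finset.sum_congr rfl fun _ _ => by ring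
    simp only [h2]
    rw [Finset.prod_univ_sum, Fintype.piFinset_univ]
    let E : (α → α) ≃ (ι → α × α) :=
      ((e.arrowCongr (Equiv.refl α)).symm.trans (Equiv.curry ι (Fin 2) α)).trans
        (Equiv.piCongrRight fun _ => finTwoArrowEquiv α)
    rw [← Equiv.sum_comp E]
    refine Finset.sum_congr rfl fun f _ => ?_
    rw [Finset.prod_mul_distrib, ← Equiv.prod_comp e (fun a => P (σ a) (f a)),
      Fintype.prod_prod_type]
    simp [E, Fin.prod_univ_two]
  have h3 : ∀ f : α → α, (∑ σ : Equiv.Perm α, ((Equiv.Perm.sign σ : ℤ) : ℝ) * ∏ a, P (σ a) (f a))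
      = (P.submatrix id f).det := by
    intro f
    rw [Matrix.det_apply']
    rfl
  unfold pfS
  simp only [h1, Finset.mul_sum]
  rw [Finset.sum_comm]
  have h4 : ∀ f : α → α, (∑ σ : Equiv.Perm α, ((Equiv.Perm.sign σ : ℤ) : ℝ) *
      ((∏ a, P (σ a) (f a)) * ∏ i, M (f (e (i, 0))) (f (e (i, 1)))))
      = (P.submatrix id f).det * ∏ i, M (f (e (i, 0))) (f (e (i, 1))) := by
    intro f
    rw [← h3, Finset.sum_mul]
    simp only [mul_assoc]
  simp only [h4]
  symm
  refine Finset.sum_of_injOn (fun σ : Equiv.Perm α => (σ : α → α)) ?_ ?_ ?_ ?_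
  · intro a _ b _ h
    exact DFunLike.coe_injective h
  · simp
  · intro f _ hf
    have hni : ¬ Function.Injective f := by
      intro hi
      exact hf ⟨Equiv.ofBijective f (Finite.injective_iff_bijective.1 hi), by simp, rfl⟩
    simp only [Function.Injective, not_forall] at hni
    obtain ⟨a, b, hab, hne⟩ := hni
    rw [Matrix.det_zero_of_column_eq hne (fun c => by simp [hab]), zero_mul]
  · intro σ _
    have := Matrix.det_permute' σ P
    rw [this]
    ring

theorem pfS_pairs {ι α : Type*} [Fintype ι] [DecidableEq ι] [Fintype α] [DecidableEq α]
    (e : ι × Fin 2 ≃ α) (π : Equiv.Perm ι) :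
    Equiv.Perm.sign (e.permCongr (Equiv.prodCongr π (Equiv.refl (Fin 2)))) = 1 := by
  rw [Equiv.Perm.sign_permCongr]
  have : (Equiv.prodCongr π (Equiv.refl (Fin 2)))
      = (Equiv.prodCongrLeft (fun _ : Fin 2 => π)) := by
    ext x <;> simp
  rw [this, Equiv.Perm.sign_prodCongrLeft]
  simp

theorem exists_perm_finset {γ : Type*} [Fintype γ] [DecidableEq γ] (s t : Finset γ)
    (h : s.card = t.card) : ∃ π : Equiv.Perm γ, ∀ i, π i ∈ t ↔ i ∈ s := by
  let E : {x // x ∈ s} ≃ {x // x ∈ t} := Finset.equivOfCardEq h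
  refine ⟨E.extendSubtype, fun i => ?_⟩
  constructor
  · intro hi
    by_contra hc
    exact E.extendSubtype_not_mem i hc hi
  · intro hi
    exact E.extendSubtype_mem i hi

/-- pairing on a sum type -/
def sumE {ι κ α β : Type*} (e1 : ι × Fin 2 ≃ α) (e2 : κ × Fin 2 ≃ β) :
    (ι ⊕ κ) × Fin 2 ≃ α ⊕ β :=
  (Equiv.sumProdDistrib ι κ (Fin 2)).trans (Equiv.sumCongr e1 e2)

section
set_option linter.unusedSectionVars false
variable {ι κ α β : Type*} [Fintype ι] [Fintype κ] [DecidableEq ι] [DecidableEq κ]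
    [Fintype α] [DecidableEq α] [Fintype β] [DecidableEq β]
    (e1 : ι × Fin 2 ≃ α) (e2 : κ × Fin 2 ≃ β) (A : Matrix α α ℝ) (Y : Matrix β β ℝ)

/-- summand -/
def trm (σ : Equiv.Perm (α ⊕ β)) : ℝ :=
  ((Equiv.Perm.sign σ : ℤ) : ℝ) *
    ∏ i : ι ⊕ κ, Matrix.fromBlocks A 0 0 Y (σ (sumE e1 e2 (i, 0))) (σ (sumE e1 e2 (i, 1)))

/-- pairs sent to the left block -/
def sset (σ : Equiv.Perm (α ⊕ β)) : Finset (ι ⊕ κ) :=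
  Finset.univ.filter fun i => (σ (sumE e1 e2 (i, 0))).isLeft = true

theorem trm_ne (σ : Equiv.Perm (α ⊕ β)) (h : trm e1 e2 A Y σ ≠ 0) (i : ι ⊕ κ) :
    (σ (sumE e1 e2 (i, 1))).isLeft = (σ (sumE e1 e2 (i, 0))).isLeft := by
  have h1 := Finset.prod_ne_zero_iff.1 (right_ne_zero_of_mul h) i (Finset.mem_univ _)
  rcases hx : σ (sumE e1 e2 (i, 0)) with x | x <;>
    rcases hy : σ (sumE e1 e2 (i, 1)) with y | y <;> simp_all

theorem trm_card (σ : Equiv.Perm (α ⊕ β)) (h : trm e1 e2 A Y σ ≠ 0) :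
    (sset e1 e2 σ).card = Fintype.card ι := by
  have h1 : ∑ a : α ⊕ β, (if a.isLeft = true then 1 else 0) = Fintype.card α := by
    rw [Fintype.sum_sum_type]; simp
  rw [← Equiv.sum_comp σ, ← Equiv.sum_comp (sumE e1 e2), Fintype.sum_prod_type] at h1
  simp only [Fin.sum_univ_two, trm_ne e1 e2 A Y σ h] at h1
  rw [← Fintype.card_congr e1, Fintype.card_prod, Fintype.card_fin] at h1
  rw [sset, Finset.card_filter]
  rw [Finset.sum_add_distrib] at h1
  omega

theorem trm_s0 : ∑ σ : Equiv.Perm (α ⊕ β) with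
      sset e1 e2 σ = Finset.univ.filter (fun i => i.isLeft = true), trm e1 e2 A Y σ
    = pfS e1 A * pfS e2 Y := by
  unfold pfS
  rw [Finset.sum_mul_sum, ← Finset.sum_product', Finset.univ_product_univ]
  symm
  refine Finset.sum_of_injOn (fun p : Equiv.Perm α × Equiv.Perm β => Equiv.Perm.sumCongr p.1 p.2)
    ?_ ?_ ?_ ?_
  · intro a _ b _ h
    exact Equiv.Perm.sumCongrHom_injective h
  · rintro ⟨a, b⟩ _
    rw [Finset.mem_coe, Finset.mem_filter]
    refine ⟨Finset.mem_univ _, ?_⟩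
    unfold sset
    ext i
    rcases i with i | i <;> simp [sumE]
  · intro σ hσ hn
    by_contra h0
    apply hn
    simp only [Finset.mem_filter, Finset.mem_univ, true_and, sset, Finset.ext_iff] at hσ
    have hm : Set.MapsTo σ (Set.range Sum.inl) (Set.range Sum.inl) := by
      rintro _ ⟨a, rfl⟩
      obtain ⟨⟨i, b⟩, rfl⟩ := e1.surjective a
      have h2 := trm_ne e1 e2 A Y σ h0 (Sum.inl i)
      have h3 := (hσ (Sum.inl i)).2 (by simp)
      rw [h3] at h2
      have h4 : (σ (Sum.inl (e1 (i, b)))).isLeft = true := by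
        fin_cases b
        · exact h3
        · exact h2
      obtain ⟨y, hy⟩ := Sum.isLeft_iff.1 h4
      exact ⟨y, hy.symm⟩
    obtain ⟨p, hp⟩ := Equiv.Perm.mem_sumCongrHom_range_of_perm_mapsTo_inl hm
    exact ⟨p, by simp, hp⟩
  · rintro ⟨a, b⟩ _
    simp [trm, sumE, Fintype.prod_sum_type]
    ring

theorem trm_s (s : Finset (ι ⊕ κ)) (hs : s.card = Fintype.card ι) :
    ∑ σ : Equiv.Perm (α ⊕ β) with sset e1 e2 σ = s, trm e1 e2 A Y σ
    = pfS e1 A * pfS e2 Y := by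
  rw [← trm_s0]
  obtain ⟨π, hπ⟩ := exists_perm_finset s (Finset.univ.filter (fun i : ι ⊕ κ => i.isLeft = true)) (by
    rw [hs, Finset.card_filter, Fintype.sum_sum_type]; simp)
  let Q := (sumE e1 e2).permCongr (Equiv.prodCongr π (Equiv.refl (Fin 2)))
  have hQ : ∀ i b, Q (sumE e1 e2 (i, b)) = sumE e1 e2 (π i, b) := by
    intro i b; simp [Q]
  have hsg : Equiv.Perm.sign Q = 1 := pfS_pairs _ _
  have ht : ∀ σ, trm e1 e2 A Y (σ * Q) = trm e1 e2 A Y σ := by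
    intro σ
    unfold trm
    rw [Equiv.Perm.sign_mul, hsg]
    simp only [Equiv.Perm.mul_apply, hQ, mul_one]
    congr 1
    exact Equiv.prod_comp π (fun i => Matrix.fromBlocks A 0 0 Y
      (σ (sumE e1 e2 (i, 0))) (σ (sumE e1 e2 (i, 1))))
  rw [Finset.sum_filter, Finset.sum_filter, ← Equiv.sum_comp (Equiv.mulRight Q)]
  refine Finset.sum_congr rfl fun σ _ => ?_
  simp only [Equiv.coe_mulRight, ht]
  congr 1
  simp only [eq_iff_iff, Finset.ext_iff, sset, Finset.mem_filter, Finset.mem_univ, true_and,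
    Equiv.Perm.mul_apply, hQ] at hπ ⊢
  simp only [← hπ]
  exact ⟨fun h i => by simpa using h (π.symm i), fun h i => h (π i)⟩

theorem pfS_sum : pfS (sumE e1 e2) (Matrix.fromBlocks A 0 0 Y)
    = ((Fintype.card ι + Fintype.card κ).choose (Fintype.card ι) : ℝ)
      * (pfS e1 A * pfS e2 Y) := by
  change ∑ σ, trm e1 e2 A Y σ = _
  have h1 : ∑ σ, trm e1 e2 A Y σ = ∑ σ with (sset e1 e2 σ).card = Fintype.card ι,
      trm e1 e2 A Y σ := by
    symm
    apply Finset.sum_filter_of_ne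
    intro σ _ h
    exact trm_card e1 e2 A Y σ h
  rw [h1, ← Finset.sum_fiberwise_of_maps_to (g := sset e1 e2)
    (t := Finset.powersetCard (Fintype.card ι) (Finset.univ : Finset (ι ⊕ κ)))]
  · rw [Finset.sum_congr rfl (g := fun _ => pfS e1 A * pfS e2 Y)]
    · simp
    · intro s hs
      have hs' := (Finset.mem_powersetCard.1 hs).2
      rw [← trm_s e1 e2 A Y s hs', Finset.filter_filter]
      refine Finset.sum_congr ?_ fun _ _ => rfl
      ext σ
      simp only [Finset.mem_filter, Finset.mem_univ, true_and]
      exact ⟨fun h => h.2, fun h => ⟨by rw [h, hs'], h⟩⟩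
  · intro σ hσ
    simpa using hσ

end

theorem Pf_eq {ι : Type*} [Fintype ι] {m : ℕ} (hm : Even m) (e : ι × Fin 2 ≃ Fin m)
    (g : ι ≃ Fin (m / 2)) (h0 : ∀ i, (e (i, 0)).val = 2 * (g i).val)
    (h1 : ∀ i, (e (i, 1)).val = 2 * (g i).val + 1) (A : Matrix (Fin m) (Fin m) ℝ) :
    Pf A = (((2 : ℝ) ^ (m / 2) * (Nat.factorial (m / 2)))⁻¹) * pfS e A := by
  rw [Pf, if_pos hm, pfS]
  congr 1
  refine Finset.sum_congr rfl fun σ _ => ?_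
  congr 1
  rw [← Equiv.prod_comp g]
  refine Finset.prod_congr rfl fun i _ => ?_
  congr 2
  · exact Fin.ext (h0 i).symm
  · exact Fin.ext (h1 i).symm

/-- standard pairing -/
def stdE (m : ℕ) (hm : Even m) : Fin (m / 2) × Fin 2 ≃ Fin m :=
  finProdFinEquiv.trans (finCongr (Nat.div_mul_cancel hm.two_dvd))

theorem stdE0 (m : ℕ) (hm : Even m) (i : Fin (m / 2)) : (stdE m hm (i, 0)).val = 2 * i.val := by
  simp [stdE]

theorem stdE1 (m : ℕ) (hm : Even m) (i : Fin (m / 2)) :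
    (stdE m hm (i, 1)).val = 2 * i.val + 1 := by
  simp [stdE]; omega

theorem Pf_std {m : ℕ} (hm : Even m) (A : Matrix (Fin m) (Fin m) ℝ) :
    Pf A = (((2 : ℝ) ^ (m / 2) * (Nat.factorial (m / 2)))⁻¹) * pfS (stdE m hm) A :=
  Pf_eq hm _ (Equiv.refl _) (stdE0 m hm) (stdE1 m hm) A

theorem Pf_add {N k : ℕ} (hN : Even N) (hk : Even k) (M : Matrix (Fin (N + k)) (Fin (N + k)) ℝ) :
    Pf M = (((2 : ℝ) ^ (N / 2 + k / 2) * (Nat.factorial (N / 2 + k / 2)))⁻¹) *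
      pfS (sumE (stdE N hN) (stdE k hk)) (M.submatrix finSumFinEquiv finSumFinEquiv) := by
  have hh : N / 2 + k / 2 = (N + k) / 2 := by
    obtain ⟨a, rfl⟩ := hN
    obtain ⟨b, rfl⟩ := hk
    omega
  have hN2 := Nat.div_mul_cancel hN.two_dvd
  rw [← pfS_reindex, hh]
  refine Pf_eq (hN.add hk) _ (finSumFinEquiv.trans (finCongr hh)) ?_ ?_ M
  · rintro (i | i)
    · simp [sumE, stdE0]
    · simp [sumE, stdE0]; omega
  · rintro (i | i)
    · simp [sumE, stdE1]
    · simp [sumE, stdE1]; omega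

open Matrix in
theorem Pf_schur {N k : ℕ} (hN : Even N) (M : Matrix (Fin (N + k)) (Fin (N + k)) ℝ)
    (A : Matrix (Fin N) (Fin N) ℝ) (B : Matrix (Fin N) (Fin k) ℝ) (D : Matrix (Fin k) (Fin k) ℝ)
    (hA : Aᵀ = -A) (hdet : IsUnit A.det)
    (hM : M.submatrix finSumFinEquiv finSumFinEquiv = fromBlocks A B (-Bᵀ) D) :
    Pf M = Pf (D + Bᵀ * A⁻¹ * B) * Pf A := by
  by_cases hk : Even k
  · have hAi : (A⁻¹)ᵀ = -A⁻¹ := by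
      rw [transpose_nonsing_inv, hA]
      apply inv_eq_right_inv
      rw [neg_mul_neg, mul_nonsing_inv _ hdet]
    have hfac : fromBlocks A B (-Bᵀ) D = fromBlocks 1 0 (-Bᵀ * A⁻¹) 1 *
        fromBlocks A 0 0 (D + Bᵀ * A⁻¹ * B) * (fromBlocks 1 0 (-Bᵀ * A⁻¹) 1)ᵀ := by
      have h1 : A * (A⁻¹ * B) = B := by rw [← Matrix.mul_assoc, mul_nonsing_inv _ hdet, Matrix.one_mul]
      have h2 : -Bᵀ * A⁻¹ * A = -Bᵀ := by rw [Matrix.mul_assoc, nonsing_inv_mul _ hdet, Matrix.mul_one]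
      have h3 : (-Bᵀ * A⁻¹)ᵀ = A⁻¹ * B := by
        rw [transpose_mul, hAi, transpose_neg, transpose_transpose, Matrix.neg_mul, Matrix.mul_neg, neg_neg]
      rw [fromBlocks_transpose, h3, fromBlocks_multiply, fromBlocks_multiply]
      simp only [Matrix.one_mul, Matrix.mul_one, Matrix.mul_zero, Matrix.zero_mul, add_zero,
        zero_add, transpose_one, transpose_zero, h1, h2]
      congr 1
      rw [Matrix.mul_assoc, Matrix.neg_mul]
      abel
    rw [Pf_add hN hk, hM, hfac, pfS_congr, pfS_sum, det_fromBlocks_zero₁₂, Pf_std hN, Pf_std hk]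
    simp only [Fintype.card_fin, det_one, one_mul]
    have hc := Nat.add_choose_mul_factorial_mul_factorial (N / 2) (k / 2)
    rw [← Nat.choose_symm_add] at hc
    have hc' : ((N / 2 + k / 2).choose (N / 2) : ℝ) * (N / 2).factorial * (k / 2).factorial
      = (N / 2 + k / 2).factorial := by exact_mod_cast hc
    have f1 : ((N / 2).factorial : ℝ) ≠ 0 := by positivity
    have f2 : ((k / 2).factorial : ℝ) ≠ 0 := by positivity
    have f3 : ((N / 2 + k / 2).choose (N / 2) : ℝ) ≠ 0 := by
      have := Nat.choose_pos (Nat.le_add_right (N / 2) (k / 2))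
      positivity
    rw [← hc', pow_add]
    field_simp
  · have : ¬ Even (N + k) := by
      rw [Nat.even_add]; tauto
    rw [Pf, if_neg this, Pf, if_neg hk, zero_mul]

open Matrix in
theorem pf_factorization (N n : ℕ) (hN : Even N)
    (X : Matrix (Fin (N + n)) (Fin (N + n)) ℝ) (hskew : Xᵀ = -X)
    (hinv : IsUnit (X.submatrix (fun i : Fin N => (⟨i.val, by omega⟩ : Fin (N + n)))
      (fun i : Fin N => (⟨i.val, by omega⟩ : Fin (N + n)))).det) :
    ∃ Y : Matrix (Fin n) (Fin n) ℝ, Yᵀ = -Y ∧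
      ∀ I : Finset (Fin n),
        Pf (X.submatrix (embNI N n I) (embNI N n I)) =
          Pf (Y.submatrix (embI I) (embI I)) *
            Pf (X.submatrix (fun i : Fin N => (⟨i.val, by omega⟩ : Fin (N + n)))
              (fun i : Fin N => (⟨i.val, by omega⟩ : Fin (N + n)))) := by
  have hX : ∀ i j, X i j = - X j i := by
    intro i j
    have := congrFun (congrFun hskew j) i
    simpa using this
  set u : Fin N → Fin (N + n) := fun i => ⟨i.val, by omega⟩ with hu
  let v : Fin n → Fin (N + n) := Fin.natAdd N
  have hA : (X.submatrix u u)ᵀ = -(X.submatrix u u) := by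
    ext i j
    simp [hX (u j) (u i)]
  have hAi : ((X.submatrix u u)⁻¹)ᵀ = -(X.submatrix u u)⁻¹ := by
    rw [transpose_nonsing_inv, hA]
    apply inv_eq_right_inv
    rw [neg_mul_neg, mul_nonsing_inv _ hinv]
  refine ⟨X.submatrix v v + (X.submatrix u v)ᵀ * (X.submatrix u u)⁻¹ * X.submatrix u v, ?_, ?_⟩
  · rw [transpose_add, transpose_mul, transpose_mul, transpose_transpose, hAi, Matrix.neg_mul,
      Matrix.mul_neg, neg_add, Matrix.mul_assoc]
    congr 1
    ext i j
    simp [hX (v j) (v i)]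
  · intro I
    have e1 : ∀ a : Fin N, embNI N n I (Fin.castAdd I.card a) = u a := by
      intro a; simp [embNI, hu]
    have e2 : ∀ b : Fin I.card, embNI N n I (Fin.natAdd N b) = v (embI I b) := by
      intro b
      apply Fin.ext
      simp [embNI, v]
    rw [Pf_schur hN _ (X.submatrix u u) (X.submatrix u (v ∘ embI I))
      (X.submatrix (v ∘ embI I) (v ∘ embI I)) hA hinv]
    · rfl
    · ext i j
      rcases i with i | i <;> rcases j with j | j <;> simp [e1, e2]
      exact hX _ _
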